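/- Let n ≥ 1 and α ∈ (0, 1]. There exists a constant C = C(n, α) > 0 such that for every locally integrable u₀ : ℝ^n → ℝ and every x ∈ ℝ^n: sup_{t>0} ∫_{ℝ^n} |𝔤_t^α(x−y)| · |u₀(y)| dy ≤ C · M u₀(x), where both sides are interpreted as values in [0, ∞]. -/

import Mathlib

open MeasureTheory Set
open scoped ENNReal FourierTransform

noncomputable section

/-- Euclidean space `ℝ^n`. -/
abbrev Rn (n : ℕ) := EuclideanSpace ℝ (Fin n)

/-- Luxemburg norm of an `ℝ≥0∞`-valued function for a variable exponent `p`. -/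
def luxNorm {Ω : Type*} [MeasurableSpace Ω] (μ : Measure Ω) (p : Ω → ℝ) (f : Ω → ℝ≥0∞) : ℝ≥0∞ :=
  sInf {lam : ℝ≥0∞ | 0 < lam ∧ ∫⁻ x, (f x / lam) ^ (p x) ∂μ ≤ 1}

/-- Luxemburg norm `‖f‖_{L^{p(·)}}` of a real-valued function. -/
def luxNormR {Ω : Type*} [MeasurableSpace Ω] (μ : Measure Ω) (p : Ω → ℝ) (f : Ω → ℝ) : ℝ≥0∞ :=
  luxNorm μ p (fun x => ENNReal.ofReal |f x|)

/-- `p(·) ∈ P^log(Ω)`: measurable, with values in `[1,∞)` on `Ω`, locally log-Hölder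
continuous on `Ω`, and satisfying the log-Hölder decay condition on `Ω`. -/
def IsPLog {E : Type*} [NormedAddCommGroup E] [MeasurableSpace E] (Ω : Set E) (p : E → ℝ) : Prop :=
  Measurable p ∧ (∀ x ∈ Ω, 1 ≤ p x) ∧
  ∃ C₁ > (0:ℝ), ∃ C₂ > (0:ℝ), ∃ pinf : ℝ,
    (∀ x ∈ Ω, ∀ y ∈ Ω, x ≠ y →
      |1 / p x - 1 / p y| ≤ C₁ / Real.log (Real.exp 1 + 1 / ‖x - y‖)) ∧
    (∀ x ∈ Ω, |1 / p x - 1 / pinf| ≤ C₂ / Real.log (Real.exp 1 + ‖x‖))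

/-- The fractional heat kernel `𝔤_t^α` on `ℝ^n`: the inverse Fourier transform of
`ξ ↦ exp (-t‖ξ‖^{2α})` (it is real-valued; we take the real part). -/
def gKer (n : ℕ) (α t : ℝ) (x : Rn n) : ℝ :=
  (𝓕⁻ (fun ξ : Rn n => (Real.exp (-t * ‖ξ‖ ^ (2 * α)) : ℂ)) x).re

/-- Convolution on `ℝ^n`. -/
def conv (n : ℕ) (g f : Rn n → ℝ) (x : Rn n) : ℝ := ∫ y, g (x - y) * f y

/-- The uncentered Hardy–Littlewood maximal function, valued in `[0,∞]`. -/
def maximalFn (n : ℕ) (f : Rn n → ℝ) (x : Rn n) : ℝ≥0∞ :=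
  ⨆ (c : Rn n) (r : ℝ) (_ : 0 < r) (_ : x ∈ Metric.ball c r),
    (∫⁻ y in Metric.ball c r, ENNReal.ofReal |f y|) / volume (Metric.ball c r)

open Filter Topology ProbabilityTheory
open scoped NNReal Nat Real

/-!
For `0 < s` and `0 < α < 1` one has `s ^ α = c ∫ (1 - e^{-su}) u ^ (-1-α) du`, so `e^{-t s ^ α}` is
a limit of Laplace transforms of probability measures on `(0, ∞)`: compound Poisson laws, whose
jumps follow the truncated Lévy measure, with a vanishing drift (Bochner subordination). At
`s = ‖ξ‖ ^ 2` this exhibits `𝔤_t^α` as a pointwise limit of mixtures of Gaussians, hence as a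
nonnegative radially decreasing function of integral at most `1`. The superlevel sets of such a
kernel are balls, so by the layer-cake formula its convolution with `|u₀|` is at most its integral
times the centred maximal function (Stein's majorant principle), and `C = 1` works.
-/

section RadiallyAntitone

theorem eq_empty_or_Iio_or_Iic_or_univ_of_isLowerSet {α : Type*}
    [ConditionallyCompleteLinearOrder α] {T : Set α} (hT : IsLowerSet T) :
    T = ∅ ∨ (∃ a, T = Iio a) ∨ (∃ a, T = Iic a) ∨ T = univ := by
  rcases T.eq_empty_or_nonempty with rfl | hne
  · exact Or.inl rfl
  by_cases hbdd : BddAbove T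
  · have hIio : Iio (sSup T) ⊆ T := fun r hr =>
      let ⟨_, hs, hrs⟩ := exists_lt_of_lt_csSup hne hr
      hT hrs.le hs
    by_cases hmem : sSup T ∈ T
    · exact Or.inr <| Or.inr <| Or.inl
        ⟨sSup T, Subset.antisymm (fun _ hr => le_csSup hbdd hr) fun _ hr => hT hr hmem⟩
    · exact Or.inr <| Or.inl ⟨sSup T, Subset.antisymm
        (fun r hr => (le_csSup hbdd hr).lt_of_ne fun h => hmem (h ▸ hr)) hIio⟩
  · refine Or.inr <| Or.inr <| Or.inr <| eq_univ_of_forall fun r => ?_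
    obtain ⟨s, hs, hrs⟩ := not_bddAbove_iff.1 hbdd r
    exact hT hrs.le hs

section Metric

variable {X : Type*} [PseudoMetricSpace X] [MeasurableSpace X] {μ ν : Measure X} {M : ℝ≥0∞} {x : X}

theorem measure_univ_le_mul_of_forall_ball
    (h : ∀ r, ν (Metric.ball x r) ≤ M * μ (Metric.ball x r)) : ν univ ≤ M * μ univ := by
  have hmono : Monotone fun k : ℕ => Metric.ball x k := fun _ _ hkl =>
    Metric.ball_subset_ball (Nat.cast_le.2 hkl)
  rw [← Metric.iUnion_ball_nat x, hmono.measure_iUnion, iSup_le_iff]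
  exact fun k => (h k).trans (by gcongr; exact subset_iUnion_of_subset k Subset.rfl)

variable [OpensMeasurableSpace X] [ProperSpace X] [IsFiniteMeasureOnCompacts μ]

theorem measure_closedBall_le_mul_of_forall_ball (hM : M ≠ ∞)
    (h : ∀ r, ν (Metric.ball x r) ≤ M * μ (Metric.ball x r)) (r : ℝ) :
    ν (Metric.closedBall x r) ≤ M * μ (Metric.closedBall x r) := by
  have hlim : Tendsto (fun s => μ (Metric.ball x s)) (𝓝[>] r) (𝓝 (μ (Metric.closedBall x r))) := by
    have hInter : ⋂ s > r, Metric.ball x s = Metric.closedBall x r := by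
      ext y
      simp only [mem_iInter, Metric.mem_ball, Metric.mem_closedBall]
      exact forall_gt_iff_le
    rw [← hInter]
    exact tendsto_measure_biInter_gt (fun _ _ => measurableSet_ball.nullMeasurableSet)
      (fun _ _ _ => Metric.ball_subset_ball) ⟨r + 1, by simp, measure_ball_lt_top.ne⟩
  refine ge_of_tendsto (ENNReal.Tendsto.const_mul hlim (Or.inr hM)) ?_
  filter_upwards [self_mem_nhdsWithin] with s hs
  exact (measure_mono (Metric.closedBall_subset_ball hs)).trans (h s)

theorem measure_preimage_dist_le_mul_of_forall_ball (hM : M ≠ ∞)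
    (h : ∀ r, ν (Metric.ball x r) ≤ M * μ (Metric.ball x r)) {T : Set ℝ} (hT : IsLowerSet T) :
    ν {y | dist y x ∈ T} ≤ M * μ {y | dist y x ∈ T} := by
  rcases eq_empty_or_Iio_or_Iic_or_univ_of_isLowerSet hT with rfl | ⟨r, rfl⟩ | ⟨r, rfl⟩ | rfl
  · simp
  · exact h r
  · exact measure_closedBall_le_mul_of_forall_ball hM h r
  · exact measure_univ_le_mul_of_forall_ball h

end Metric

/-- A radially decreasing function: its value at a point depends only on the norm of the point,
and decreases with it. -/
def RadiallyAntitone {V : Type*} [Norm V] (K : V → ℝ) : Prop :=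
  ∀ ⦃x y : V⦄, ‖x‖ ≤ ‖y‖ → K y ≤ K x

namespace RadiallyAntitone

variable {V : Type*} [SeminormedAddCommGroup V]

theorem of_tendsto {ι : Type*} {l : Filter ι} [l.NeBot] {K : ι → V → ℝ} {K' : V → ℝ}
    (hK : ∀ i, RadiallyAntitone (K i)) (hlim : ∀ x, Tendsto (fun i => K i x) l (𝓝 (K' x))) :
    RadiallyAntitone K' :=
  fun x y hxy => le_of_tendsto_of_tendsto' (hlim y) (hlim x) fun i => hK i hxy

theorem exists_isLowerSet {K : V → ℝ} (hK : RadiallyAntitone K) (a : ℝ) :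
    ∃ T : Set ℝ, IsLowerSet T ∧ ∀ x, a < K x ↔ ‖x‖ ∈ T :=
  ⟨{r | ∃ z, r ≤ ‖z‖ ∧ a < K z}, fun _ _ hsr ⟨z, hrz, hz⟩ => ⟨z, hsr.trans hrz, hz⟩,
    fun x => ⟨fun hx => ⟨x, le_rfl, hx⟩, fun ⟨_, hxz, hz⟩ => hz.trans_le (hK hxz)⟩⟩

variable [MeasurableSpace V] [OpensMeasurableSpace V]

theorem measurable {K : V → ℝ} (hK : RadiallyAntitone K) : Measurable K := by
  refine measurable_of_Ioi fun a => ?_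
  obtain ⟨T, hT, hKT⟩ := hK.exists_isLowerSet a
  rw [show K ⁻¹' Ioi a = norm ⁻¹' T from ext hKT]
  exact hT.ordConnected.measurableSet.preimage continuous_norm.measurable

/-- Layer-cake decomposition: every superlevel set of `y ↦ K (x - y)` is a ball around `x`. -/
theorem lintegral_sub_le_mul_of_forall_ball [MeasurableSub V] [ProperSpace V] {K : V → ℝ}
    (hK : RadiallyAntitone K) (hK₀ : 0 ≤ K) {μ ν : Measure V} [IsFiniteMeasureOnCompacts μ]
    {M : ℝ≥0∞} (hM : M ≠ ∞) {x : V}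
    (h : ∀ r, ν (Metric.ball x r) ≤ M * μ (Metric.ball x r)) :
    ∫⁻ y, ENNReal.ofReal (K (x - y)) ∂ν ≤ M * ∫⁻ y, ENNReal.ofReal (K (x - y)) ∂μ := by
  have hmeas : Measurable fun y => K (x - y) := hK.measurable.comp (measurable_const_sub x)
  have layerCake (ρ : Measure V) : ∫⁻ y, ENNReal.ofReal (K (x - y)) ∂ρ =
      ∫⁻ a in Ioi (0 : ℝ), ρ {y | a < K (x - y)} :=
    lintegral_eq_lintegral_meas_lt ρ (ae_of_all _ fun y => hK₀ (x - y)) hmeas.aemeasurable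
  rw [layerCake, layerCake, ← lintegral_const_mul' _ _ hM]
  refine lintegral_mono fun a => ?_
  obtain ⟨T, hT, hKT⟩ := hK.exists_isLowerSet a
  simp only [hKT, ← dist_eq_norm, dist_comm x]
  exact measure_preimage_dist_le_mul_of_forall_ball hM h hT

end RadiallyAntitone

/-- The centred Hardy–Littlewood maximal function of `f`, the supremum of the averages of `f` over
the balls centred at `x`, for functions with values in `[0, ∞]`. -/
def centeredMaximalFn {V : Type*} [PseudoMetricSpace V] [MeasureSpace V] (f : V → ℝ≥0∞) (x : V) :
    ℝ≥0∞ :=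
  ⨆ (r : ℝ) (_ : 0 < r), ⨍⁻ y in Metric.ball x r, f y ∂volume

theorem setLIntegral_ball_le_centeredMaximalFn_mul {V : Type*} [PseudoMetricSpace V]
    [MeasureSpace V] [ProperSpace V]
    [(volume : Measure V).IsOpenPosMeasure] [IsFiniteMeasureOnCompacts (volume : Measure V)]
    (f : V → ℝ≥0∞) (x : V) (r : ℝ) :
    ∫⁻ y in Metric.ball x r, f y ≤ centeredMaximalFn f x * volume (Metric.ball x r) := by
  rcases le_or_gt r 0 with hr | hr
  · simp [Metric.ball_eq_empty.2 hr]
  rw [← ENNReal.div_le_iff (Metric.measure_ball_pos _ _ hr).ne' measure_ball_lt_top.ne,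
    ← setLAverage_eq]
  exact le_iSup₂_of_le r hr le_rfl

theorem RadiallyAntitone.lintegral_sub_mul_le {V : Type*} [NormedAddCommGroup V]
    [MeasureSpace V] [BorelSpace V] [ProperSpace V] [(volume : Measure V).IsAddHaarMeasure]
    {K : V → ℝ} (hK : RadiallyAntitone K) (hK₀ : 0 ≤ K) {f : V → ℝ≥0∞} (hf : AEMeasurable f)
    (x : V) :
    ∫⁻ y, ENNReal.ofReal (K (x - y)) * f y ≤
      centeredMaximalFn f x * ∫⁻ y, ENNReal.ofReal (K y) := by
  have hKm : Measurable fun y => ENNReal.ofReal (K (x - y)) :=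
    (hK.measurable.comp (measurable_const_sub x)).ennreal_ofReal
  rw [← lintegral_sub_left_eq_self (fun y => ENNReal.ofReal (K y)) x]
  rcases eq_or_ne (∫⁻ y, ENNReal.ofReal (K (x - y))) 0 with hK₁ | hK₁
  · refine (lintegral_eq_zero_of_ae_eq_zero ?_).trans_le zero_le
    filter_upwards [(lintegral_eq_zero_iff hKm).1 hK₁] with y hy
    rw [hy, Pi.zero_apply, zero_mul]
  rcases eq_or_ne (centeredMaximalFn f x) ∞ with hM | hM
  · rw [hM, ENNReal.top_mul hK₁]
    exact le_top
  calc ∫⁻ y, ENNReal.ofReal (K (x - y)) * f y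
      = ∫⁻ y, ENNReal.ofReal (K (x - y)) ∂volume.withDensity f := by
        simp_rw [lintegral_withDensity_eq_lintegral_mul₀ hf hKm.aemeasurable, Pi.mul_apply,
          mul_comm]
    _ ≤ centeredMaximalFn f x * ∫⁻ y, ENNReal.ofReal (K (x - y)) :=
        hK.lintegral_sub_le_mul_of_forall_ball hK₀ hM fun r =>
          (withDensity_apply f measurableSet_ball).trans_le
            (setLIntegral_ball_le_centeredMaximalFn_mul f x r)

end RadiallyAntitone

section CompoundPoisson

variable {M : Type*} [AddMonoid M] [MeasurableSpace M]

/-- The `k`-fold convolution power `ν ∗ ⋯ ∗ ν` of a measure. -/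
def convPow (ν : Measure M) : ℕ → Measure M
  | 0 => Measure.dirac 0
  | k + 1 => convPow ν k ∗ ν

/-- The compound Poisson law `e^{-ν(M)} ∑ ν^{∗k} / k!` with finite jump measure `ν`. -/
def compoundPoisson (ν : Measure M) : Measure M :=
  Measure.sum fun k => ENNReal.ofReal (Real.exp (-ν.real univ) * (k ! : ℝ)⁻¹) • convPow ν k

variable [MeasurableAdd₂ M] (ν : Measure M)

theorem lintegral_exp_convPow [SFinite ν] {X : M →+ ℝ} (hX : Measurable X) (t : ℝ) (k : ℕ) :
    ∫⁻ u, ENNReal.ofReal (Real.exp (t * X u)) ∂convPow ν k =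
      (∫⁻ u, ENNReal.ofReal (Real.exp (t * X u)) ∂ν) ^ k := by
  have hmeas : Measurable fun u => ENNReal.ofReal (Real.exp (t * X u)) := by fun_prop
  induction k with
  | zero => simp [convPow, lintegral_dirac' _ hmeas]
  | succ k ih =>
    rw [convPow, Measure.lintegral_conv hmeas, pow_succ, ← ih, ← lintegral_mul_const _ hmeas]
    refine lintegral_congr fun u => ?_
    rw [← lintegral_const_mul _ hmeas]
    refine lintegral_congr fun v => ?_
    rw [map_add, mul_add, Real.exp_add, ENNReal.ofReal_mul (Real.exp_nonneg _)]

theorem mgf_compoundPoisson [SFinite ν] {X : M →+ ℝ} (hX : Measurable X) {t : ℝ}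
    (hint : Integrable (fun u => Real.exp (t * X u)) ν) :
    mgf X (compoundPoisson ν) t = Real.exp (mgf X ν t - ν.real univ) := by
  set m := ν.real univ
  have hν : ∫⁻ u, ENNReal.ofReal (Real.exp (t * X u)) ∂ν = ENNReal.ofReal (mgf X ν t) :=
    (ofReal_integral_eq_lintegral_ofReal hint (ae_of_all _ fun _ => Real.exp_nonneg _)).symm
  have hsum : HasSum (fun k : ℕ => Real.exp (-m) * (k ! : ℝ)⁻¹ * mgf X ν t ^ k)
      (Real.exp (mgf X ν t - m)) := by
    have h := (NormedSpace.expSeries_div_hasSum_exp (mgf X ν t)).mul_left (Real.exp (-m))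
    rw [← Real.exp_eq_exp_ℝ, ← Real.exp_add, neg_add_eq_sub] at h
    simpa only [div_eq_inv_mul, mul_assoc] using h
  have hlint : ∫⁻ u, ENNReal.ofReal (Real.exp (t * X u)) ∂compoundPoisson ν =
      ENNReal.ofReal (Real.exp (mgf X ν t - m)) := by
    rw [compoundPoisson, lintegral_sum_measure, ← hsum.tsum_eq,
      ENNReal.ofReal_tsum_of_nonneg
        (fun k => mul_nonneg (by positivity) (pow_nonneg mgf_nonneg k)) hsum.summable]
    refine tsum_congr fun k => ?_
    rw [lintegral_smul_measure, lintegral_exp_convPow ν hX, hν, smul_eq_mul,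
      ← ENNReal.ofReal_pow mgf_nonneg, ← ENNReal.ofReal_mul (by positivity)]
  rw [mgf, integral_eq_lintegral_of_nonneg_ae (ae_of_all _ fun _ => Real.exp_nonneg _)
    (by fun_prop), hlint, ENNReal.toReal_ofReal (Real.exp_nonneg _)]

instance isProbabilityMeasure_compoundPoisson [IsFiniteMeasure ν] :
    IsProbabilityMeasure (compoundPoisson ν) := by
  have h := mgf_compoundPoisson ν (X := 0) measurable_const (t := 0) (by simp)
  rw [mgf_zero', mgf_zero', sub_self, Real.exp_zero] at h
  exact ⟨(ENNReal.toReal_eq_one_iff _).1 h⟩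

end CompoundPoisson

section StableSubordinator

variable {α s t u : ℝ}

theorem rpow_mul_one_sub_exp_nonneg (hs : 0 ≤ s) (hu : 0 ≤ u) :
    0 ≤ u ^ (-1 - α) * (1 - Real.exp (-s * u)) :=
  mul_nonneg (Real.rpow_nonneg hu _) <| sub_nonneg.2 <| Real.exp_le_one_iff.2 <|
    mul_nonpos_of_nonpos_of_nonneg (neg_nonpos.2 hs) hu

theorem rpow_mul_one_sub_exp_le_rpow (hu : 0 ≤ u) :
    u ^ (-1 - α) * (1 - Real.exp (-s * u)) ≤ u ^ (-1 - α) :=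
  mul_le_of_le_one_right (Real.rpow_nonneg hu _) (sub_le_self _ (Real.exp_nonneg _))

theorem rpow_mul_one_sub_exp_le_mul_rpow (hu : 0 < u) :
    u ^ (-1 - α) * (1 - Real.exp (-s * u)) ≤ s * u ^ (-α) := by
  have hexp : 1 - Real.exp (-s * u) ≤ s * u := by linarith [Real.add_one_le_exp (-s * u)]
  calc u ^ (-1 - α) * (1 - Real.exp (-s * u))
      ≤ u ^ (-1 - α) * (s * u) := mul_le_mul_of_nonneg_left hexp (Real.rpow_nonneg hu.le _)
    _ = s * (u ^ (-1 - α) * u ^ (1 : ℝ)) := by rw [Real.rpow_one]; ring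
    _ = s * u ^ (-α) := by rw [← Real.rpow_add hu]; ring_nf

theorem integrableOn_Ioc_rpow {r : ℝ} (hr : -1 < r) {ε : ℝ} (hε : 0 < ε) :
    IntegrableOn (fun u : ℝ => u ^ r) (Ioc 0 ε) := by
  rw [integrableOn_Ioc_iff_integrableOn_Ioo]
  exact (intervalIntegral.integrableOn_Ioo_rpow_iff hε).2 hr

theorem integrableOn_rpow_mul_one_sub_exp (h0 : 0 < α) (h1 : α < 1) (hs : 0 ≤ s) :
    IntegrableOn (fun u : ℝ => u ^ (-1 - α) * (1 - Real.exp (-s * u))) (Ioi 0) := by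
  have hmeas (S : Set ℝ) : AEStronglyMeasurable
      (fun u : ℝ => u ^ (-1 - α) * (1 - Real.exp (-s * u))) (volume.restrict S) :=
    Measurable.aestronglyMeasurable (by fun_prop)
  rw [← Ioc_union_Ioi_eq_Ioi (zero_le_one (α := ℝ))]
  refine IntegrableOn.union ?_ ?_
  · refine ((integrableOn_Ioc_rpow (neg_lt_neg h1) one_pos).const_mul s).mono' (hmeas _) ?_
    filter_upwards [ae_restrict_mem measurableSet_Ioc] with u hu
    rw [Real.norm_of_nonneg (rpow_mul_one_sub_exp_nonneg hs hu.1.le)]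
    exact rpow_mul_one_sub_exp_le_mul_rpow hu.1
  · refine (integrableOn_Ioi_rpow_of_lt (a := -1 - α) (by linarith) one_pos).mono' (hmeas _) ?_
    filter_upwards [ae_restrict_mem measurableSet_Ioi] with u hu
    have hu₀ : 0 ≤ u := zero_le_one.trans (le_of_lt hu)
    rw [Real.norm_of_nonneg (rpow_mul_one_sub_exp_nonneg hs hu₀)]
    exact rpow_mul_one_sub_exp_le_rpow hu₀

theorem setIntegral_Ioc_rpow_mul_one_sub_exp_le (h0 : 0 < α) (h1 : α < 1) (hs : 0 ≤ s) {ε : ℝ}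
    (hε : 0 < ε) :
    ∫ u in Ioc 0 ε, u ^ (-1 - α) * (1 - Real.exp (-s * u)) ≤ s * (ε ^ (1 - α) / (1 - α)) := by
  calc ∫ u in Ioc 0 ε, u ^ (-1 - α) * (1 - Real.exp (-s * u))
      ≤ ∫ u in Ioc 0 ε, s * u ^ (-α) :=
        setIntegral_mono_on
          ((integrableOn_rpow_mul_one_sub_exp h0 h1 hs).mono_set Ioc_subset_Ioi_self)
          ((integrableOn_Ioc_rpow (neg_lt_neg h1) hε).const_mul s) measurableSet_Ioc
          fun u hu => rpow_mul_one_sub_exp_le_mul_rpow hu.1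
    _ = s * (ε ^ (1 - α) / (1 - α)) := by
        rw [integral_const_mul, ← intervalIntegral.integral_of_le hε.le,
          integral_rpow (Or.inl (neg_lt_neg h1)), neg_add_eq_sub,
          Real.zero_rpow (sub_pos.2 h1).ne', sub_zero]

/-- The normalizing constant of the `α`-stable Lévy measure: `u ^ (-1 - α) du` has Laplace exponent
`stableConst α * s ^ α`. -/
def stableConst (α : ℝ) : ℝ :=
  ∫ u in Ioi (0 : ℝ), u ^ (-1 - α) * (1 - Real.exp (-u))

theorem stableConst_pos (h0 : 0 < α) (h1 : α < 1) : 0 < stableConst α := by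
  have hint := integrableOn_rpow_mul_one_sub_exp h0 h1 zero_le_one
  simp only [neg_one_mul] at hint
  have hpos (u : ℝ) (hu : u ∈ Ioi (0 : ℝ)) : 0 < u ^ (-1 - α) * (1 - Real.exp (-u)) :=
    mul_pos (Real.rpow_pos_of_pos hu _) (by simpa using hu)
  rw [stableConst, setIntegral_pos_iff_support_of_nonneg_ae
    ((ae_restrict_mem measurableSet_Ioi).mono fun u hu => (hpos u hu).le) hint,
    inter_eq_right.2 fun u hu => Function.mem_support.2 (hpos u hu).ne']
  simp

theorem integral_rpow_mul_one_sub_exp (h0 : 0 < α) (hs : 0 ≤ s) :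
    ∫ u in Ioi (0 : ℝ), u ^ (-1 - α) * (1 - Real.exp (-s * u)) = stableConst α * s ^ α := by
  rcases hs.eq_or_lt with rfl | hs
  · simp [Real.zero_rpow h0.ne']
  have hscale := integral_comp_mul_left_Ioi
    (fun u : ℝ => u ^ (-1 - α) * (1 - Real.exp (-u))) 0 hs
  rw [mul_zero, smul_eq_mul, ← stableConst, eq_inv_mul_iff_mul_eq₀ hs.ne'] at hscale
  have hpow : s ^ α * s * s ^ (-1 - α) = 1 := by
    rw [mul_assoc, ← Real.rpow_one_add' hs.le (by linarith), ← Real.rpow_add hs]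
    ring_nf
    exact Real.rpow_zero s
  rw [← hscale, ← integral_const_mul, ← integral_mul_const]
  refine setIntegral_congr_fun measurableSet_Ioi fun u hu => ?_
  simp only [Real.mul_rpow hs.le (le_of_lt hu), ← neg_mul]
  linear_combination (-(u ^ (-1 - α) * (1 - Real.exp (-s * u)))) * hpow

/-- The jumps larger than `ε` of the Lévy measure `c u ^ (-1 - α) du` on `[0, ∞)`. -/
def stableLevyTail (α c ε : ℝ) : Measure ℝ≥0 :=
  ((volume.restrict (Ioi ε)).withDensity fun u => ENNReal.ofReal (c * u ^ (-1 - α))).map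
    Real.toNNReal

theorem isFiniteMeasure_stableLevyTail (h0 : 0 < α) {c ε : ℝ} (hε : 0 < ε) :
    IsFiniteMeasure (stableLevyTail α c ε) := by
  have := isFiniteMeasure_withDensity_ofReal
    ((integrableOn_Ioi_rpow_of_lt (a := -1 - α) (by linarith) hε).const_mul c).2
  exact inferInstanceAs (IsFiniteMeasure (Measure.map _ _))

theorem integral_one_sub_exp_stableLevyTail {c ε : ℝ} (hc : 0 ≤ c) (hε : 0 < ε) :
    ∫ u, (1 - Real.exp (-s * u)) ∂stableLevyTail α c ε =
      c * ∫ u in Ioi ε, u ^ (-1 - α) * (1 - Real.exp (-s * u)) := by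
  rw [stableLevyTail, integral_map (by fun_prop) (by fun_prop),
    integral_withDensity_eq_integral_toReal_smul (by fun_prop) (by simp), ← integral_const_mul]
  refine setIntegral_congr_fun measurableSet_Ioi fun u hu => ?_
  have hu₀ : 0 < u := hε.trans hu
  have hdens : 0 ≤ c * u ^ (-1 - α) := by positivity
  simp only [ENNReal.toReal_ofReal hdens, Real.coe_toNNReal u hu₀.le, smul_eq_mul, mul_assoc]

/-- Discarding the small jumps costs at most an arbitrarily small drift. -/
theorem exists_stableLevyTail_exponent_bounds (h0 : 0 < α) (h1 : α < 1) (ht : 0 < t) {b : ℝ}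
    (hb : 0 < b) : ∃ c, ∃ ε > 0, ∀ s, 0 ≤ s →
      t * s ^ α - b * s ≤ ∫ u, (1 - Real.exp (-s * u)) ∂stableLevyTail α c ε ∧
      ∫ u, (1 - Real.exp (-s * u)) ∂stableLevyTail α c ε ≤ t * s ^ α := by
  set c : ℝ := t / stableConst α with hc_def
  have hK : 0 < stableConst α := stableConst_pos h0 h1
  have hα : 0 < 1 - α := sub_pos.2 h1
  have hc : 0 < c := div_pos ht hK
  obtain ⟨ε, hε, hεb⟩ : ∃ ε > 0, c * (ε ^ (1 - α) / (1 - α)) = b := by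
    refine ⟨(b * (1 - α) / c) ^ (1 - α)⁻¹, by positivity, ?_⟩
    rw [Real.rpow_inv_rpow (by positivity) hα.ne']
    field_simp
  refine ⟨c, ε, hε, fun s hs => ?_⟩
  have hint := integrableOn_rpow_mul_one_sub_exp h0 h1 hs
  have hsplit : t * s ^ α = c * (∫ u in Ioc 0 ε, u ^ (-1 - α) * (1 - Real.exp (-s * u))) +
      ∫ u, (1 - Real.exp (-s * u)) ∂stableLevyTail α c ε := by
    rw [integral_one_sub_exp_stableLevyTail hc.le hε, ← mul_add,
      ← setIntegral_union Ioc_disjoint_Ioi_same measurableSet_Ioi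
        (hint.mono_set Ioc_subset_Ioi_self) (hint.mono_set (Ioi_subset_Ioi hε.le)),
      Ioc_union_Ioi_eq_Ioi hε.le, integral_rpow_mul_one_sub_exp h0 hs, hc_def]
    field_simp
  have hsmall₀ : 0 ≤ c * ∫ u in Ioc 0 ε, u ^ (-1 - α) * (1 - Real.exp (-s * u)) :=
    mul_nonneg hc.le <| setIntegral_nonneg measurableSet_Ioc fun u hu =>
      rpow_mul_one_sub_exp_nonneg hs hu.1.le
  have hsmall : c * ∫ u in Ioc 0 ε, u ^ (-1 - α) * (1 - Real.exp (-s * u)) ≤ b * s :=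
    calc _ ≤ c * (s * (ε ^ (1 - α) / (1 - α))) :=
          mul_le_mul_of_nonneg_left (setIntegral_Ioc_rpow_mul_one_sub_exp_le h0 h1 hs hε) hc.le
      _ = b * s := by rw [← hεb]; ring
  constructor <;> linarith

theorem mgf_compoundPoisson_neg (ν : Measure ℝ≥0) [IsFiniteMeasure ν] (hs : 0 ≤ s) :
    mgf NNReal.toReal (compoundPoisson ν) (-s) =
      Real.exp (-∫ u, (1 - Real.exp (-s * u)) ∂ν) := by
  have hint : Integrable (fun u : ℝ≥0 => Real.exp (-s * u)) ν := by
    refine Integrable.of_bound (by fun_prop) 1 (ae_of_all _ fun u => ?_)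
    rw [Real.norm_of_nonneg (Real.exp_nonneg _), Real.exp_le_one_iff]
    exact mul_nonpos_of_nonpos_of_nonneg (neg_nonpos.2 hs) u.2
  have h := mgf_compoundPoisson ν (X := (NNReal.toRealHom : ℝ≥0 →+ ℝ)) measurable_coe_nnreal_real
    hint
  rw [integral_sub (integrable_const _) hint, integral_const, smul_eq_mul, mul_one, neg_sub]
  exact h

/-- The drift `b` keeps the law away from `0`, where the Gaussian kernels are unbounded. -/
theorem exists_subordinator (h0 : 0 < α) (h1 : α ≤ 1) (ht : 0 < t) {b : ℝ≥0} (hb : 0 < b) :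
    ∃ μ : Measure ℝ≥0, IsProbabilityMeasure μ ∧ (∀ᵐ u ∂μ, b ≤ u) ∧ ∀ s, 0 ≤ s →
      Real.exp (-t * s ^ α - b * s) ≤ mgf NNReal.toReal μ (-s) ∧
      mgf NNReal.toReal μ (-s) ≤ Real.exp (-t * s ^ α) := by
  rcases h1.eq_or_lt with rfl | h1
  · refine ⟨Measure.dirac (b + t.toNNReal), inferInstance, by simp [ae_dirac_eq], fun s hs => ?_⟩
    rw [mgf, integral_dirac, NNReal.coe_add, Real.coe_toNNReal t ht.le, Real.rpow_one]
    constructor <;> rw [Real.exp_le_exp] <;> nlinarith [mul_nonneg b.2 hs]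
  · obtain ⟨c, ε, hε, hψ⟩ := exists_stableLevyTail_exponent_bounds h0 h1 ht (NNReal.coe_pos.2 hb)
    have := isFiniteMeasure_stableLevyTail h0 (c := c) hε
    have hshift : Measurable fun u : ℝ≥0 => b + u := by fun_prop
    refine ⟨(compoundPoisson (stableLevyTail α c ε)).map (b + ·),
      Measure.isProbabilityMeasure_map hshift.aemeasurable,
      (ae_map_iff hshift.aemeasurable measurableSet_Ici).2 (ae_of_all _ fun _ => le_self_add),
      fun s hs => ?_⟩
    rw [mgf_map hshift.aemeasurable (by fun_prop),
      show NNReal.toReal ∘ (b + ·) = fun u : ℝ≥0 => (b : ℝ) + u from rfl, mgf_const_add,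
      mgf_compoundPoisson_neg _ hs, ← Real.exp_add]
    obtain ⟨hlow, hupp⟩ := hψ s hs
    constructor <;> rw [Real.exp_le_exp] <;> linarith

theorem exists_tendsto_mgf_exp_neg_mul_rpow (h0 : 0 < α) (h1 : α ≤ 1) (ht : 0 < t) :
    ∃ μ : ℕ → Measure ℝ≥0, (∀ j, IsProbabilityMeasure (μ j)) ∧
      (∀ j, ∃ b > 0, ∀ᵐ u ∂μ j, b ≤ u) ∧ ∀ s, 0 ≤ s →
        (∀ j, mgf NNReal.toReal (μ j) (-s) ≤ Real.exp (-t * s ^ α)) ∧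
        Tendsto (fun j => mgf NNReal.toReal (μ j) (-s)) atTop (𝓝 (Real.exp (-t * s ^ α))) := by
  let b : ℕ → ℝ≥0 := fun j => 1 / ((j : ℝ≥0) + 1)
  have hb (j : ℕ) : 0 < b j := by positivity
  have hb_lim : Tendsto (fun j => (b j : ℝ)) atTop (𝓝 0) := by
    simpa [b] using tendsto_one_div_add_atTop_nhds_zero_nat (𝕜 := ℝ)
  choose μ hμ hμb hμs using fun j => exists_subordinator h0 h1 ht (hb j)
  refine ⟨μ, hμ, fun j => ⟨b j, hb j, hμb j⟩, fun s hs => ⟨fun j => (hμs j s hs).2, ?_⟩⟩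
  have hlow : Tendsto (fun j => Real.exp (-t * s ^ α - b j * s)) atTop
      (𝓝 (Real.exp (-t * s ^ α))) := by
    refine (Real.continuous_exp.tendsto _).comp ?_
    simpa using (hb_lim.mul_const s).const_sub (-t * s ^ α)
  exact tendsto_of_tendsto_of_tendsto_of_le_of_le hlow tendsto_const_nhds
    (fun j => (hμs j s hs).1) fun j => (hμs j s hs).2

end StableSubordinator

section GaussianMixture

variable {V : Type*} [NormedAddCommGroup V] [InnerProductSpace ℝ V]

/-- The Gauss–Weierstrass kernel: the inverse Fourier transform of `ξ ↦ exp (-v * ‖ξ‖ ^ 2)`. -/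
def gaussianKernel (v : ℝ) (x : V) : ℝ :=
  (π / v) ^ (Module.finrank ℝ V / 2 : ℝ) * Real.exp (-π ^ 2 * ‖x‖ ^ 2 / v)

theorem gaussianKernel_nonneg {v : ℝ} (hv : 0 ≤ v) (x : V) : 0 ≤ gaussianKernel v x := by
  unfold gaussianKernel
  positivity

theorem radiallyAntitone_gaussianKernel {v : ℝ} (hv : 0 ≤ v) :
    RadiallyAntitone (gaussianKernel v : V → ℝ) := by
  intro x y hxy
  unfold gaussianKernel
  simp only [neg_mul]
  gcongr

theorem gaussianKernel_le {b v : ℝ} (hb : 0 < b) (hbv : b ≤ v) (x : V) :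
    gaussianKernel v x ≤ (π / b) ^ (Module.finrank ℝ V / 2 : ℝ) := by
  have hv : 0 < v := hb.trans_le hbv
  calc gaussianKernel v x ≤ gaussianKernel v (0 : V) :=
        radiallyAntitone_gaussianKernel hv.le (by simp)
    _ = (π / v) ^ (Module.finrank ℝ V / 2 : ℝ) := by simp [gaussianKernel]
    _ ≤ (π / b) ^ (Module.finrank ℝ V / 2 : ℝ) := by gcongr

/-- The mixture of the Gaussian kernels `gaussianKernel u` over a law `μ` of the parameter `u`. -/
def gaussianMixture (μ : Measure ℝ≥0) (x : V) : ℝ :=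
  ∫ u, gaussianKernel u x ∂μ

variable {μ : Measure ℝ≥0} {b : ℝ≥0}

theorem gaussianMixture_nonneg (μ : Measure ℝ≥0) (x : V) : 0 ≤ gaussianMixture μ x :=
  integral_nonneg fun u => gaussianKernel_nonneg u.coe_nonneg x

theorem integrable_gaussianKernel [IsFiniteMeasure μ] (hb : 0 < b) (hμ : ∀ᵐ u ∂μ, b ≤ u) (x : V) :
    Integrable (fun u : ℝ≥0 => gaussianKernel u x) μ := by
  refine Integrable.of_bound (by unfold gaussianKernel; fun_prop)
    ((π / b) ^ (Module.finrank ℝ V / 2 : ℝ)) (hμ.mono fun u hu => ?_)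
  rw [Real.norm_of_nonneg (gaussianKernel_nonneg u.coe_nonneg x)]
  exact gaussianKernel_le (NNReal.coe_pos.2 hb) (NNReal.coe_le_coe.2 hu) x

theorem radiallyAntitone_gaussianMixture [IsFiniteMeasure μ] (hb : 0 < b)
    (hμ : ∀ᵐ u ∂μ, b ≤ u) : RadiallyAntitone (gaussianMixture μ : V → ℝ) := fun x y hxy =>
  integral_mono (integrable_gaussianKernel hb hμ y) (integrable_gaussianKernel hb hμ x)
    fun u => radiallyAntitone_gaussianKernel u.coe_nonneg hxy

variable [MeasurableSpace V] [BorelSpace V] [FiniteDimensional ℝ V]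

theorem fourierInv_exp_neg_mul_sq_norm {v : ℝ} (hv : 0 < v) (x : V) :
    𝓕⁻ (fun ξ : V => (Real.exp (-v * ‖ξ‖ ^ 2) : ℂ)) x = (gaussianKernel v x : ℂ) := by
  have h := fourier_gaussian_innerProductSpace (b := (v : ℂ)) (V := V) (by simpa using hv) (-x)
  rw [Real.fourierInv_eq_fourier_neg]
  convert h using 2
  · push_cast
    rfl
  · rw [gaussianKernel, norm_neg]
    push_cast
    rw [Complex.ofReal_cpow (by positivity)]
    push_cast
    rfl

theorem integrable_exp_neg_mul_rpow_norm {t p : ℝ} (ht : 0 < t) (hp : 0 < p) :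
    Integrable fun ξ : V => Real.exp (-t * ‖ξ‖ ^ p) := by
  rcases subsingleton_or_nontrivial V with _ | _
  · have : IsFiniteMeasure (volume : Measure V) := CompactSpace.isFiniteMeasure
    exact Integrable.of_subsingleton
  rw [integrable_fun_norm_addHaar volume (f := fun r => Real.exp (-t * r ^ p))]
  have hdim : (-1 : ℝ) < (Module.finrank ℝ V - 1 : ℕ) :=
    neg_one_lt_zero.trans_le (Nat.cast_nonneg _)
  simpa only [Real.rpow_natCast, smul_eq_mul] using
    integrableOn_rpow_mul_exp_neg_mul_rpow hdim hp ht

theorem lintegral_gaussianKernel {v : ℝ} (hv : 0 < v) :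
    ∫⁻ y : V, ENNReal.ofReal (gaussianKernel v y) = 1 := by
  have hw : 0 < π ^ 2 / v := by positivity
  have hexp : Integrable fun ξ : V => Real.exp (-(π ^ 2 / v) * ‖ξ‖ ^ 2) := by
    simpa only [Real.rpow_two] using integrable_exp_neg_mul_rpow_norm (V := V) hw two_pos
  have hform : (gaussianKernel v : V → ℝ) = fun y =>
      (π / v) ^ (Module.finrank ℝ V / 2 : ℝ) * Real.exp (-(π ^ 2 / v) * ‖y‖ ^ 2) := by
    ext y
    rw [gaussianKernel]
    ring_nf
  have hint : ∫ y : V, gaussianKernel v y = 1 := by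
    have hcancel : π / v * (π / (π ^ 2 / v)) = 1 := by field_simp
    rw [hform, integral_const_mul, GaussianFourier.integral_rexp_neg_mul_sq_norm hw,
      ← Real.mul_rpow (by positivity) (by positivity), hcancel, Real.one_rpow]
  rw [← ofReal_integral_eq_lintegral_ofReal (hform ▸ hexp.const_mul _)
    (ae_of_all _ (gaussianKernel_nonneg hv.le)), hint, ENNReal.ofReal_one]

theorem lintegral_gaussianMixture_le_one [IsProbabilityMeasure μ] (hμ : ∀ᵐ u ∂μ, 0 < u) :
    ∫⁻ x : V, ENNReal.ofReal (gaussianMixture μ x) ≤ 1 := by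
  have hmeas : Measurable fun p : V × ℝ≥0 => ENNReal.ofReal (gaussianKernel p.2 p.1) := by
    unfold gaussianKernel
    fun_prop
  calc ∫⁻ x : V, ENNReal.ofReal (gaussianMixture μ x)
      ≤ ∫⁻ x : V, (∫⁻ u : ℝ≥0, ENNReal.ofReal (gaussianKernel u x) ∂μ) := by
        refine lintegral_mono fun x => ?_
        rw [← Real.enorm_of_nonneg (gaussianMixture_nonneg μ x)]
        refine (enorm_integral_le_lintegral_enorm _).trans_eq (lintegral_congr fun u => ?_)
        exact Real.enorm_of_nonneg (gaussianKernel_nonneg u.coe_nonneg x)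
    _ = ∫⁻ u : ℝ≥0, (∫⁻ x : V, ENNReal.ofReal (gaussianKernel u x)) ∂μ :=
        lintegral_lintegral_swap hmeas.aemeasurable
    _ = ∫⁻ _, 1 ∂μ := lintegral_congr_ae (hμ.mono fun u hu => lintegral_gaussianKernel hu)
    _ = 1 := by simp

theorem fourierInv_mgf_neg_sq_norm [IsFiniteMeasure μ] (hb : 0 < b) (hμ : ∀ᵐ u ∂μ, b ≤ u)
    (x : V) :
    𝓕⁻ (fun ξ : V => (mgf NNReal.toReal μ (-‖ξ‖ ^ 2) : ℂ)) x = (gaussianMixture μ x : ℂ) := by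
  let F : V → ℝ≥0 → ℂ := fun ξ u =>
    Complex.exp ((2 * π * inner ℝ ξ x : ℝ) * Complex.I) * (Real.exp (-u * ‖ξ‖ ^ 2) : ℂ)
  have hexp : Integrable fun ξ : V => Real.exp (-(b : ℝ) * ‖ξ‖ ^ 2) := by
    simpa only [Real.rpow_two] using
      integrable_exp_neg_mul_rpow_norm (V := V) (NNReal.coe_pos.2 hb) two_pos
  have hF : Integrable (Function.uncurry F) (volume.prod μ) := by
    refine (hexp.comp_fst μ).mono'
      (Measurable.aestronglyMeasurable (by unfold F Function.uncurry; fun_prop)) ?_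
    filter_upwards [Measure.quasiMeasurePreserving_snd.ae hμ] with ⟨ξ, u⟩ hu
    simp only [F, Function.uncurry_apply_pair, norm_mul, Complex.norm_exp_ofReal_mul_I, one_mul,
      Complex.norm_real, Real.norm_eq_abs, Real.abs_exp, neg_mul]
    gcongr
  calc 𝓕⁻ (fun ξ : V => (mgf NNReal.toReal μ (-‖ξ‖ ^ 2) : ℂ)) x
      = ∫ ξ, ∫ u, F ξ u ∂μ := by
        rw [Real.fourierInv_eq']
        refine integral_congr_ae (ae_of_all _ fun ξ => ?_)
        simp only [F, smul_eq_mul, mgf]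
        rw [integral_const_mul, ← integral_complex_ofReal]
        simp only [neg_mul, mul_comm (‖ξ‖ ^ 2)]
    _ = ∫ u, (∫ ξ, F ξ u) ∂μ := integral_integral_swap hF
    _ = ∫ u, (gaussianKernel u x : ℂ) ∂μ := by
        refine integral_congr_ae (hμ.mono fun u hu => ?_)
        simp only
        rw [← fourierInv_exp_neg_mul_sq_norm (NNReal.coe_pos.2 (hb.trans_le hu)),
          Real.fourierInv_eq']
        rfl
    _ = (gaussianMixture μ x : ℂ) := integral_complex_ofReal

end GaussianMixture

section FractionalHeatKernel

variable {V : Type*} [NormedAddCommGroup V] [InnerProductSpace ℝ V] [MeasurableSpace V]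
  [BorelSpace V] [FiniteDimensional ℝ V]

theorem tendsto_fourierInv_of_dominated_convergence {E : Type*} [NormedAddCommGroup E]
    [NormedSpace ℂ E] {F : ℕ → V → E} {f : V → E} (bound : V → ℝ)
    (hF : ∀ j, AEStronglyMeasurable (F j)) (hbound : Integrable bound)
    (hle : ∀ j, ∀ᵐ ξ, ‖F j ξ‖ ≤ bound ξ)
    (hlim : ∀ᵐ ξ, Tendsto (fun j => F j ξ) atTop (𝓝 (f ξ))) (x : V) :
    Tendsto (fun j => 𝓕⁻ (F j) x) atTop (𝓝 (𝓕⁻ f x)) := by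
  simp only [Real.fourierInv_eq']
  refine tendsto_integral_of_dominated_convergence bound (fun j => ?_) hbound
    (fun j => (hle j).mono fun ξ hξ => ?_) (hlim.mono fun ξ hξ => hξ.const_smul _)
  · exact AEStronglyMeasurable.smul (f := fun ξ : V =>
      Complex.exp ((2 * π * inner ℝ ξ x : ℝ) * Complex.I))
      (Measurable.aestronglyMeasurable (by fun_prop)) (hF j)
  · rwa [norm_smul, Complex.norm_exp_ofReal_mul_I, one_mul]

/-- The fractional heat kernel `𝔤_t^α` on a finite-dimensional inner product space; on `Rn n` it is
`gKer n α t`, and as there the real part is taken only to have a real-valued function. -/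
def fracHeatKernel (α t : ℝ) (x : V) : ℝ :=
  (𝓕⁻ (fun ξ : V => (Real.exp (-t * ‖ξ‖ ^ (2 * α)) : ℂ)) x).re

variable {α t : ℝ}

variable (V) in
theorem exists_tendsto_gaussianMixture_fracHeatKernel (h0 : 0 < α) (h1 : α ≤ 1) (ht : 0 < t) :
    ∃ μ : ℕ → Measure ℝ≥0, (∀ j, IsProbabilityMeasure (μ j)) ∧
      (∀ j, ∃ b > 0, ∀ᵐ u ∂μ j, b ≤ u) ∧
      ∀ x : V, Tendsto (fun j => gaussianMixture (μ j) x) atTop (𝓝 (fracHeatKernel α t x)) := by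
  obtain ⟨μ, hμ, hμb, hμs⟩ := exists_tendsto_mgf_exp_neg_mul_rpow h0 h1 ht
  refine ⟨μ, hμ, hμb, fun x => ?_⟩
  have hpow (ξ : V) : (‖ξ‖ ^ 2) ^ α = ‖ξ‖ ^ (2 * α) := by
    rw [Real.rpow_mul (norm_nonneg _), Real.rpow_two]
  have hmeas (j : ℕ) : AEStronglyMeasurable
      (fun ξ : V => (mgf NNReal.toReal (μ j) (-‖ξ‖ ^ 2) : ℂ)) := by
    have h : Measurable fun p : V × ℝ≥0 => Real.exp (-‖p.1‖ ^ 2 * p.2) := by fun_prop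
    exact (Complex.continuous_ofReal.comp_stronglyMeasurable
      h.stronglyMeasurable.integral_prod_right').aestronglyMeasurable
  have hlim : Tendsto (fun j => 𝓕⁻ (fun ξ : V => (mgf NNReal.toReal (μ j) (-‖ξ‖ ^ 2) : ℂ)) x)
      atTop (𝓝 (𝓕⁻ (fun ξ : V => (Real.exp (-t * ‖ξ‖ ^ (2 * α)) : ℂ)) x)) := by
    refine tendsto_fourierInv_of_dominated_convergence _ hmeas
      (integrable_exp_neg_mul_rpow_norm ht (p := 2 * α) (by positivity))
      (fun j => ae_of_all _ fun ξ => ?_) (ae_of_all _ fun ξ => ?_) x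
    · rw [Complex.norm_real, Real.norm_of_nonneg mgf_nonneg, ← hpow]
      exact (hμs _ (sq_nonneg _)).1 j
    · rw [← hpow]
      exact (Complex.continuous_ofReal.tendsto _).comp (hμs _ (sq_nonneg _)).2
  refine ((Complex.continuous_re.tendsto _).comp hlim).congr fun j => ?_
  obtain ⟨b, hb, hbμ⟩ := hμb j
  rw [Function.comp_apply, fourierInv_mgf_neg_sq_norm hb hbμ, Complex.ofReal_re]

theorem fracHeatKernel_nonneg (h0 : 0 < α) (h1 : α ≤ 1) (ht : 0 < t) (x : V) :
    0 ≤ fracHeatKernel α t x := by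
  obtain ⟨μ, _, _, hlim⟩ := exists_tendsto_gaussianMixture_fracHeatKernel V h0 h1 ht
  exact ge_of_tendsto' (hlim x) fun j => gaussianMixture_nonneg (μ j) x

theorem radiallyAntitone_fracHeatKernel (h0 : 0 < α) (h1 : α ≤ 1) (ht : 0 < t) :
    RadiallyAntitone (fracHeatKernel α t : V → ℝ) := by
  obtain ⟨μ, hμ, hμb, hlim⟩ := exists_tendsto_gaussianMixture_fracHeatKernel V h0 h1 ht
  refine RadiallyAntitone.of_tendsto (fun j => ?_) hlim
  obtain ⟨b, hb, hbμ⟩ := hμb j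
  exact radiallyAntitone_gaussianMixture hb hbμ

theorem lintegral_fracHeatKernel_le_one (h0 : 0 < α) (h1 : α ≤ 1) (ht : 0 < t) :
    ∫⁻ x : V, ENNReal.ofReal (fracHeatKernel α t x) ≤ 1 := by
  obtain ⟨μ, hμ, hμb, hlim⟩ := exists_tendsto_gaussianMixture_fracHeatKernel V h0 h1 ht
  have hmeas (j : ℕ) : Measurable fun x : V => ENNReal.ofReal (gaussianMixture (μ j) x) := by
    obtain ⟨b, hb, hbμ⟩ := hμb j
    exact (radiallyAntitone_gaussianMixture hb hbμ).measurable.ennreal_ofReal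
  have hle (j : ℕ) : ∫⁻ x : V, ENNReal.ofReal (gaussianMixture (μ j) x) ≤ 1 := by
    obtain ⟨b, hb, hbμ⟩ := hμb j
    exact lintegral_gaussianMixture_le_one (hbμ.mono fun _ hu => hb.trans_le hu)
  calc ∫⁻ x : V, ENNReal.ofReal (fracHeatKernel α t x)
      = ∫⁻ x : V, liminf (fun j => ENNReal.ofReal (gaussianMixture (μ j) x)) atTop :=
        lintegral_congr fun x => (ENNReal.tendsto_ofReal (hlim x)).liminf_eq.symm
    _ ≤ liminf (fun j => ∫⁻ x : V, ENNReal.ofReal (gaussianMixture (μ j) x)) atTop :=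
        lintegral_liminf_le hmeas
    _ ≤ 1 := liminf_le_of_frequently_le' (Frequently.of_forall hle)

theorem stmt5_general (h0 : 0 < α) (h1 : α ≤ 1) {u : V → ℝ} (hu : AEMeasurable u) (x : V) :
    ⨆ (t : ℝ) (_ : 0 < t), ∫⁻ y, ENNReal.ofReal (|fracHeatKernel α t (x - y)| * |u y|) ≤
      centeredMaximalFn (fun y => ENNReal.ofReal |u y|) x := by
  refine iSup₂_le fun t ht => ?_
  have hnonneg : ∀ y : V, 0 ≤ fracHeatKernel α t y := fracHeatKernel_nonneg h0 h1 ht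
  calc ∫⁻ y, ENNReal.ofReal (|fracHeatKernel α t (x - y)| * |u y|)
      = ∫⁻ y, ENNReal.ofReal (fracHeatKernel α t (x - y)) * ENNReal.ofReal |u y| :=
        lintegral_congr fun y => by
          rw [abs_of_nonneg (hnonneg _), ENNReal.ofReal_mul (hnonneg _)]
    _ ≤ centeredMaximalFn (fun y => ENNReal.ofReal |u y|) x *
          ∫⁻ y : V, ENNReal.ofReal (fracHeatKernel α t y) :=
        (radiallyAntitone_fracHeatKernel h0 h1 ht).lintegral_sub_mul_le hnonneg
          hu.abs.ennreal_ofReal x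
    _ ≤ centeredMaximalFn (fun y => ENNReal.ofReal |u y|) x :=
        mul_le_of_le_one_right' (lintegral_fracHeatKernel_le_one h0 h1 ht)

theorem centeredMaximalFn_ofReal_abs_le_maximalFn {n : ℕ} (u : Rn n → ℝ) (x : Rn n) :
    centeredMaximalFn (fun y => ENNReal.ofReal |u y|) x ≤ maximalFn n u x := by
  refine iSup₂_le fun r hr => ?_
  rw [setLAverage_eq]
  exact le_iSup₂_of_le x r (le_iSup₂_of_le hr (Metric.mem_ball_self hr) le_rfl)

end FractionalHeatKernel

/-- Pointwise control of the fractional heat semigroup by the maximal function: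
`sup_{t>0} ∫ |𝔤_t^α(x−y)| |u₀(y)| dy ≤ C · M u₀(x)`. -/
theorem stmt5 (n : ℕ) (hn : 1 ≤ n) (α : ℝ) (hα : 0 < α ∧ α ≤ 1) :
    ∃ C > (0:ℝ), ∀ u₀ : Rn n → ℝ, LocallyIntegrable u₀ volume → ∀ x : Rn n,
      (⨆ (t : ℝ) (_ : 0 < t), ∫⁻ y, ENNReal.ofReal (|gKer n α t (x - y)| * |u₀ y|))
        ≤ ENNReal.ofReal C * maximalFn n u₀ x := by
  refine ⟨1, one_pos, fun u₀ hu₀ x => ?_⟩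
  rw [ENNReal.ofReal_one, one_mul]
  exact (stmt5_general hα.1 hα.2 hu₀.aestronglyMeasurable.aemeasurable x).trans
    (centeredMaximalFn_ofReal_abs_le_maximalFn u₀ x)
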